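/- Let X be a real or complex normed space and let (x_n) and (y_n) be sequences in X such that ‖x_n + y_n‖ − ‖x_n‖ − ‖y_n‖ → 0. Then for any two bounded sequences (α_n), (β_n) of non-negative real numbers one also has ‖α_n x_n + β_n y_n‖ − α_n ‖x_n‖ − β_n ‖y_n‖ → 0. -/

import Mathlib

open Filter Topology

/-!
If `a, b ≤ c`, then `c • (x + y) = (a • x + b • y) + (c - a) • x + (c - b) • y`, so the triangle
inequality bounds the defect `a ‖x‖ + b ‖y‖ - ‖a • x + b • y‖` by `c` times the defect
`‖x‖ + ‖y‖ - ‖x + y‖`. For `a, b ≥ 0` the first defect is also nonnegative, and the limit follows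
by squeezing, with `c` a common upper bound of the coefficients.
-/

section NormSMulAddSMul

variable {𝕜 X : Type*} [RCLike 𝕜] [SeminormedAddCommGroup X] [NormedSpace 𝕜 X]

theorem norm_ofReal_smul_of_nonneg {a : ℝ} (ha : 0 ≤ a) (x : X) :
    ‖(a : 𝕜) • x‖ = a * ‖x‖ := by
  rw [norm_smul, RCLike.norm_of_nonneg ha]

theorem norm_ofReal_smul_add_ofReal_smul_le {a b : ℝ} (ha : 0 ≤ a) (hb : 0 ≤ b) (x y : X) :
    ‖(a : 𝕜) • x + (b : 𝕜) • y‖ ≤ a * ‖x‖ + b * ‖y‖ :=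
  norm_add_le_of_le (norm_ofReal_smul_of_nonneg ha x).le (norm_ofReal_smul_of_nonneg hb y).le

theorem mul_norm_add_sub_le_norm_ofReal_smul_add_ofReal_smul_sub {a b c : ℝ}
    (hac : a ≤ c) (hbc : b ≤ c) (x y : X) :
    c * (‖x + y‖ - ‖x‖ - ‖y‖) ≤ ‖(a : 𝕜) • x + (b : 𝕜) • y‖ - a * ‖x‖ - b * ‖y‖ := by
  have decomposition : (c : 𝕜) • (x + y) =
      ((a : 𝕜) • x + (b : 𝕜) • y) + (((c - a : ℝ) : 𝕜) • x + ((c - b : ℝ) : 𝕜) • y) := by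
    simp only [RCLike.ofReal_sub]
    module
  have triangle : c * ‖x + y‖ ≤
      ‖(a : 𝕜) • x + (b : 𝕜) • y‖ + ((c - a) * ‖x‖ + (c - b) * ‖y‖) :=
    calc
      c * ‖x + y‖ ≤ |c| * ‖x + y‖ := by gcongr; exact le_abs_self c
      _ = ‖(c : 𝕜) • (x + y)‖ := by rw [norm_smul, RCLike.norm_ofReal]
      _ ≤ _ := decomposition ▸ norm_add_le_of_le le_rfl
        (norm_ofReal_smul_add_ofReal_smul_le (sub_nonneg.2 hac) (sub_nonneg.2 hbc) x y)
  linarith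

theorem stmt_0_general {ι : Type*} {l : Filter ι} {x y : ι → X}
    (h : Tendsto (fun i => ‖x i + y i‖ - ‖x i‖ - ‖y i‖) l (𝓝 0))
    {α β : ι → ℝ} (hα0 : ∀ᶠ i in l, 0 ≤ α i) (hβ0 : ∀ᶠ i in l, 0 ≤ β i)
    (hαb : l.IsBoundedUnder (· ≤ ·) α) (hβb : l.IsBoundedUnder (· ≤ ·) β) :
    Tendsto (fun i => ‖(α i : 𝕜) • x i + (β i : 𝕜) • y i‖ - α i * ‖x i‖ - β i * ‖y i‖)
      l (𝓝 0) := by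
  obtain ⟨C, hC⟩ := hαb.sup hβb
  have lower_tendsto : Tendsto (fun i => C * (‖x i + y i‖ - ‖x i‖ - ‖y i‖)) l (𝓝 0) := by
    simpa only [mul_zero] using h.const_mul C
  refine tendsto_of_tendsto_of_tendsto_of_le_of_le' lower_tendsto tendsto_const_nhds ?_ ?_
  · filter_upwards [eventually_map.1 hC] with i hi
    obtain ⟨hαC, hβC⟩ := sup_le_iff.1 hi
    exact mul_norm_add_sub_le_norm_ofReal_smul_add_ofReal_smul_sub hαC hβC (x i) (y i)
  · filter_upwards [hα0, hβ0] with i hαi hβi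
    rw [sub_sub]
    exact sub_nonpos.2 (norm_ofReal_smul_add_ofReal_smul_le hαi hβi (x i) (y i))

end NormSMulAddSMul

/-- If `(x_n)`, `(y_n)` are sequences in a real or complex normed space with
`‖x_n + y_n‖ - ‖x_n‖ - ‖y_n‖ → 0`, then for any bounded sequences `(α_n)`, `(β_n)` of
non-negative reals, `‖α_n • x_n + β_n • y_n‖ - α_n ‖x_n‖ - β_n ‖y_n‖ → 0`. -/
theorem stmt_0 {𝕜 X : Type*} [RCLike 𝕜] [NormedAddCommGroup X] [NormedSpace 𝕜 X]
    (x y : ℕ → X)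
    (h : Tendsto (fun n => ‖x n + y n‖ - ‖x n‖ - ‖y n‖) atTop (𝓝 0))
    (α β : ℕ → ℝ) (hα0 : ∀ n, 0 ≤ α n) (hβ0 : ∀ n, 0 ≤ β n)
    (hαb : ∃ C : ℝ, ∀ n, α n ≤ C) (hβb : ∃ C : ℝ, ∀ n, β n ≤ C) :
    Tendsto (fun n => ‖(α n : 𝕜) • x n + (β n : 𝕜) • y n‖ - α n * ‖x n‖ - β n * ‖y n‖)
      atTop (𝓝 0) := by
  exact stmt_0_general h (.of_forall hα0) (.of_forall hβ0) (isBoundedUnder_of hαb)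
    (isBoundedUnder_of hβb)
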